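/- There exists a history-deterministic Büchi automaton with 65 states that recognises L_main. -/

import Mathlib

/-- A (nondeterministic) Büchi/coBüchi automaton: an initial state, a set of
transitions, and a subset of *significant* transitions. -/
structure BuchiAutomaton (σ : Type) (Q : Type) where
  init : Q
  trans : Set (Q × σ × Q)
  sig : Set (Q × σ × Q)
  sig_sub : sig ⊆ trans

namespace BuchiAutomaton

variable {σ Q : Type}

/-- `ρ` is a run of `A` on the infinite word `w`, starting at the state `p`. -/
def IsRunFrom (A : BuchiAutomaton σ Q) (p : Q) (w : ℕ → σ) (ρ : ℕ → Q) : Prop :=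
  ρ 0 = p ∧ ∀ i, (ρ i, w i, ρ (i + 1)) ∈ A.trans

/-- Büchi acceptance: the run contains infinitely many significant transitions. -/
def BuchiAcc (A : BuchiAutomaton σ Q) (w : ℕ → σ) (ρ : ℕ → Q) : Prop :=
  ∀ N, ∃ i, N ≤ i ∧ (ρ i, w i, ρ (i + 1)) ∈ A.sig

/-- coBüchi acceptance: the run contains finitely many significant transitions. -/
def CoBuchiAcc (A : BuchiAutomaton σ Q) (w : ℕ → σ) (ρ : ℕ → Q) : Prop :=
  ∃ N, ∀ i, N ≤ i → (ρ i, w i, ρ (i + 1)) ∉ A.sig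

/-- The language of `A` (as a Büchi automaton), with initial state `p`. -/
def LangFrom (A : BuchiAutomaton σ Q) (p : Q) : Set (ℕ → σ) :=
  {w | ∃ ρ, A.IsRunFrom p w ρ ∧ A.BuchiAcc w ρ}

/-- The language of `A`, read as a Büchi automaton. -/
def Lang (A : BuchiAutomaton σ Q) : Set (ℕ → σ) :=
  A.LangFrom A.init

/-- The language of `A`, read as a coBüchi automaton. -/
def CoLang (A : BuchiAutomaton σ Q) : Set (ℕ → σ) :=
  {w | ∃ ρ, A.IsRunFrom A.init w ρ ∧ A.CoBuchiAcc w ρ}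

/-- `A` is deterministic: at most one outgoing transition per state and letter. -/
def Deterministic (A : BuchiAutomaton σ Q) : Prop :=
  ∀ p a q q', (p, a, q) ∈ A.trans → (p, a, q') ∈ A.trans → q = q'

/-- `FinRun A l p`: `l` is a finite run of `A` from the initial state, ending in
the state `p` (represented as the chronological list of its transitions). -/
inductive FinRun (A : BuchiAutomaton σ Q) : List (Q × σ × Q) → Q → Prop
  | nil : FinRun A [] A.init
  | snoc {l : List (Q × σ × Q)} {p : Q} {a : σ} {q : Q} :
      FinRun A l p → (p, a, q) ∈ A.trans → FinRun A (l ++ [(p, a, q)]) q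

/-- A resolver for `A`: a function from finite runs and letters to transitions,
such that on every finite run from the initial state ending in a state `p` and
every letter `a`, it outputs a transition on `a` with source `p`. -/
structure Resolver (A : BuchiAutomaton σ Q) where
  res : List (Q × σ × Q) → σ → Q × σ × Q
  res_valid : ∀ l p a, A.FinRun l p →
    (res l a).1 = p ∧ (res l a).2.1 = a ∧ res l a ∈ A.trans

/-- The history (finite run) built by a resolver after reading `n` letters of `w`. -/
def Resolver.hist {A : BuchiAutomaton σ Q} (r : Resolver A) (w : ℕ → σ) : ℕ → List (Q × σ × Q)
  | 0 => []
  | n + 1 => r.hist w n ++ [r.res (r.hist w n) (w n)]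

/-- The run induced by the resolver on `w` satisfies the Büchi condition. -/
def Resolver.InducedBuchiAcc {A : BuchiAutomaton σ Q} (r : Resolver A) (w : ℕ → σ) : Prop :=
  ∀ N, ∃ n, N ≤ n ∧ r.res (r.hist w n) (w n) ∈ A.sig

/-- The run induced by the resolver on `w` satisfies the coBüchi condition. -/
def Resolver.InducedCoBuchiAcc {A : BuchiAutomaton σ Q} (r : Resolver A) (w : ℕ → σ) : Prop :=
  ∃ N, ∀ n, N ≤ n → r.res (r.hist w n) (w n) ∉ A.sig

/-- `A` is history-deterministic (as a Büchi automaton). -/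
def HistoryDeterministic (A : BuchiAutomaton σ Q) : Prop :=
  ∃ r : Resolver A, ∀ w ∈ A.Lang, r.InducedBuchiAcc w

/-- `A` is history-deterministic (as a coBüchi automaton). -/
def CoHistoryDeterministic (A : BuchiAutomaton σ Q) : Prop :=
  ∃ r : Resolver A, ∀ w ∈ A.CoLang, r.InducedCoBuchiAcc w

end BuchiAutomaton

/-- The finite factor `w[m..n)` of the infinite word `w`, as a list. -/
def wordSegment {σ : Type} (w : ℕ → σ) (m n : ℕ) : List σ :=
  (List.range (n - m)).map fun i => w (m + i)

/-- `omegaPow X`: the infinite words that can be written as an infinite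
concatenation of finite words, each belonging to `X`. -/
def omegaPow {σ : Type} (X : Set (List σ)) : Set (ℕ → σ) :=
  {w | ∃ φ : ℕ → ℕ, φ 0 = 0 ∧ StrictMono φ ∧ ∀ k, wordSegment w (φ k) (φ (k + 1)) ∈ X}

/-- The alphabet `Σ = {a, b, c, 1, …, 6, r₁, …, r₆, y}` (with `num i` the digit
`i+1` and `res i` the reset letter `r_{i+1}`). -/
inductive Al : Type
  | a | b | c
  | num (i : Fin 6)
  | res (i : Fin 6)
  | y
deriving DecidableEq, Fintype

/-- The states of the classifier DFA. -/
inductive CSt : Type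
  | p | q | t | s | r
  | ell (i : Fin 6)
deriving DecidableEq, Fintype

/-- The (partial) transition function of the classifier. A digit `num i` belongs
to `E = {1,2,3}` iff `i.val < 3`, and to `F = {4,5,6}` otherwise. -/
def clStep : CSt → Al → Option CSt
  | .p, .b => some .p
  | .p, .num _ => some .p
  | .p, .y => some .p
  | .p, .a => some .q
  | .p, .c => some .t
  | .q, .a => some .q
  | .q, .num _ => some .p
  | .q, .y => some .p
  | .q, .b => some .r
  | .q, .c => some .s
  | .t, .c => some .t
  | .t, .b => some .p
  | .t, .a => some .q
  | .t, .num i => if i.val < 3 then some (.ell i) else some .p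
  | .t, .y => some .p
  | .s, .c => some .s
  | .s, .b => some .r
  | .s, .a => some .q
  | .s, .num i => if i.val < 3 then some (.ell i) else some .p
  | .s, .y => some .p
  | .r, .b => some .r
  | .r, .a => some .q
  | .r, .c => some .s
  | .r, .num i => if 3 ≤ i.val then some (.ell i) else some .p
  | .r, .y => some .p
  | _, _ => none

/-- The run of the classifier on a finite word, from a given state. -/
def clRun : CSt → List Al → Option CSt
  | c, [] => some c
  | c, l :: w =>
    match clStep c l with
    | some c' => clRun c' w
    | none => none

/-- The language `L_α` (for `α : Fin 6`, representing `L_{α+1}`): the finite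
words whose run in the classifier from `p` is defined and ends in `ℓ_α`. -/
def Lcl (α : Fin 6) : Set (List Al) :=
  {w | clRun .p w = some (.ell α)}

/-- `L_main = (Σ^* ⋃_{α≠β} (L_α ∪ {r_α}) L_β L_β Σ^* y)^ω`. -/
def LMain : Set (ℕ → Al) :=
  omegaPow {w | ∃ α β : Fin 6, α ≠ β ∧ ∃ u v₁ v₂ v₃ z : List Al,
    (v₁ ∈ Lcl α ∨ v₁ = [Al.res α]) ∧ v₂ ∈ Lcl β ∧ v₃ ∈ Lcl β ∧
    w = u ++ v₁ ++ v₂ ++ v₃ ++ z ++ [Al.y]}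

namespace LMainAutomaton

/-- The non-final states of the classifier. -/
inductive Core : Type
  | p | q | t | s | r
deriving DecidableEq

instance : Fintype Core where
  elems := {.p, .q, .t, .s, .r}
  complete k := by cases k <;> simp

/-- The states of the lossy classifier used while no event is known: `p` and `t` look for a
word of some `L_e` with `e ∈ E`, while `qs` and `r` look for a word of some `L_f` with `f ∈ F`. -/
inductive Search : Type
  | p | t | qs | r
deriving DecidableEq

instance : Fintype Search where
  elems := {.p, .t, .qs, .r}
  complete k := by cases k <;> simp

/-- The states of the automaton. An *event* is a reset letter or the end of a word of some `L_α`.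
`found`: an infix of the required form has been seen, and the letter `y` is awaited.
`search`: no event is known.
`last α`: the last event carries the label `α`.
`fresh β`: the last event is a word of `L_β`, and the event before it has another label. -/
inductive St : Type
  | found
  | search (k : Search)
  | last (i : Fin 6) (k : Core)
  | fresh (i : Fin 6) (k : Core)
deriving DecidableEq, Fintype

def Core.toCSt : Core → CSt
  | .p => .p
  | .q => .q
  | .t => .t
  | .s => .s
  | .r => .r

/-- The label of the classified word that ends with the letter `x` read in state `k`, if any. -/
def hit (k : Core) (x : Al) : Option (Fin 6) :=
  match clStep k.toCSt x with
  | some (.ell i) => some i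
  | _ => none

/-- The classifier, restarted after each event. -/
def next (k : Core) (x : Al) : Core :=
  match clStep k.toCSt x with
  | some .q => .q
  | some .t => .t
  | some .s => .s
  | some .r => .r
  | _ => .p

/-- Transitions from the search states; the flag tells whether words of `L_f` with `f ∈ F`
are looked for. -/
def searchStep (m : Bool) : Search → Al → St
  | _, .res i => .last i .p
  | .p, .a => if m then .search .qs else .search .p
  | .t, .a => if m then .search .qs else .search .p
  | .p, .c => .search .t
  | .t, .c => .search .t
  | .t, .num i => if i.val < 3 then .last i .p else .search .p
  | .qs, .a => .search .qs
  | .qs, .c => .search .qs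
  | .qs, .b => .search .r
  | .r, .a => .search .qs
  | .r, .c => .search .qs
  | .r, .b => .search .r
  | .r, .num i => if i.val < 3 then .search .p else .last i .p
  | _, _ => .search .p

/-- Transitions of the automaton, the flag resolving the nondeterminism. -/
def step (m : Bool) : St → Al → St
  | .found, x => if x = .y then .search .p else .found
  | .search k, x => searchStep m k x
  | .last _ _, .res j => .last j .p
  | .last i k, x =>
    match hit k x with
    | some j => if i = j then .last j .p else .fresh j .p
    | none => .last i (next k x)
  | .fresh _ _, .res j => .last j .p
  | .fresh i k, x =>
    match hit k x with
    | some j => if i = j then .found else .fresh j .p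
    | none => .fresh i (next k x)

/-- The automaton recognising `LMain`. -/
def aut : BuchiAutomaton Al St where
  init := .search .p
  trans := {e | ∃ m, e.2.2 = step m e.1 e.2.1}
  sig := {e | e.1 = .found ∧ e.2.1 = .y ∧ e.2.2 = .search .p}
  sig_sub := by
    rintro ⟨x, l, z⟩ ⟨h₁, h₂, h₃⟩
    simp only at h₁ h₂ h₃
    subst h₁ h₂ h₃
    exact ⟨true, rfl⟩

/-! ### The classifier -/

lemma clRun_append (c : CSt) (u v : List Al) :
    clRun c (u ++ v) = (clRun c u).bind fun d => clRun d v := by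
  induction u generalizing c with
  | nil => rfl
  | cons x u ih =>
    simp only [List.cons_append, clRun]
    cases clStep c x with
    | none => rfl
    | some d => exact ih d

lemma clRun_snoc {c d : CSt} {v : List Al} (h : clRun c v = some d) (x : Al) :
    clRun c (v ++ [x]) = clStep d x := by
  rw [clRun_append, h]
  simp only [Option.bind_some, clRun]
  cases clStep d x <;> rfl

lemma clStep_of_hit : ∀ (k : Core) (x : Al) (j : Fin 6), hit k x = some j →
    clStep k.toCSt x = some (.ell j) := by decide

lemma clStep_of_hit_eq_none : ∀ (k : Core) (x : Al), hit k x = none → (∀ i, x ≠ .res i) →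
    clStep k.toCSt x = some (next k x).toCSt := by decide

lemma next_of_hit : ∀ (k : Core) (x : Al) (j : Fin 6), hit k x = some j → next k x = .p := by
  decide

lemma next_res (k : Core) (i : Fin 6) : next k (.res i) = .p := by
  cases k <;> rfl

lemma clRun_ell_eq_some (i : Fin 6) (v : List Al) (d : CSt) :
    clRun (.ell i) v = some d → v = [] := by
  cases v with
  | nil => simp
  | cons x v => cases x <;> simp [clRun, clStep]

/-- Unfolding one letter of a run of the classifier that ends in `ℓ_j`. -/
lemma clRun_cons_eq_ell {k : Core} {x : Al} {v : List Al} {j : Fin 6}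
    (h : clRun k.toCSt (x :: v) = some (.ell j)) :
    (∀ i, x ≠ .res i) ∧ (hit k x = some j ∧ v = [] ∨
      hit k x = none ∧ clRun (next k x).toCSt v = some (.ell j)) := by
  have hx : ∀ i, x ≠ .res i := by
    rintro i rfl
    cases k <;> simp [clRun, clStep, Core.toCSt] at h
  refine ⟨hx, ?_⟩
  cases hk : hit k x with
  | none =>
    simp only [clRun, clStep_of_hit_eq_none k x hk hx] at h
    exact Or.inr ⟨rfl, h⟩
  | some i =>
    simp only [clRun, clStep_of_hit k x i hk] at h
    have hv := clRun_ell_eq_some _ _ _ h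
    subst hv
    simp only [clRun, Option.some.injEq, CSt.ell.injEq] at h
    exact Or.inl ⟨by rw [h], rfl⟩

/-! ### Soundness -/

/-- Words of `L_i`, and the reset letter `r_i`. -/
def IsEvent (i : Fin 6) (v : List Al) : Prop :=
  v ∈ Lcl i ∨ v = [Al.res i]

/-- What is known about the word read since the last significant transition. -/
def Witness (l : List Al) : St → Prop
  | .found => ∃ i j : Fin 6, i ≠ j ∧ ∃ u v₁ v₂ v₃ z, IsEvent i v₁ ∧ v₂ ∈ Lcl j ∧ v₃ ∈ Lcl j ∧
      l = u ++ v₁ ++ v₂ ++ v₃ ++ z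
  | .search .p => True
  | .search .t => ∃ u v, l = u ++ v ∧ (clRun .p v = some .t ∨ clRun .p v = some .s)
  | .search .qs => ∃ u v, l = u ++ v ∧ (clRun .p v = some .q ∨ clRun .p v = some .s)
  | .search .r => ∃ u v, l = u ++ v ∧ clRun .p v = some .r
  | .last i k => ∃ u v₁ v, IsEvent i v₁ ∧ clRun .p v = some k.toCSt ∧ l = u ++ v₁ ++ v
  | .fresh j k => ∃ i, i ≠ j ∧ ∃ u v₁ v₂ v, IsEvent i v₁ ∧ v₂ ∈ Lcl j ∧
      clRun .p v = some k.toCSt ∧ l = u ++ v₁ ++ v₂ ++ v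

lemma witness_last_of_event {l u v : List Al} {i : Fin 6} (hv : IsEvent i v) (h : l = u ++ v) :
    Witness l (.last i .p) :=
  ⟨u, v, [], hv, rfl, by simp [h]⟩

lemma witness_last_res (l : List Al) (i : Fin 6) : Witness (l ++ [.res i]) (.last i .p) :=
  witness_last_of_event (Or.inr rfl) rfl

lemma witness_search_step {l : List Al} {k : Search} (h : Witness l (.search k)) (m : Bool)
    (x : Al) : Witness (l ++ [x]) (searchStep m k x) := by
  have key : ∀ {u v : List Al} {d d' : CSt}, clRun .p v = some d → clStep d x = some d' →
      l = u ++ v → l ++ [x] = u ++ (v ++ [x]) ∧ clRun .p (v ++ [x]) = some d' := by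
    intro u v d d' h₁ h₂ h₃
    exact ⟨by simp [h₃], by rw [clRun_snoc h₁, h₂]⟩
  cases x with
  | res i => cases k <;> exact witness_last_res l i
  | y => cases k <;> trivial
  | a =>
    cases k with
    | p | t => cases m; exacts [trivial, ⟨l, [.a], rfl, Or.inl rfl⟩]
    | qs | r => exact ⟨l, [.a], rfl, Or.inl rfl⟩
  | b =>
    cases k with
    | p | t => trivial
    | qs =>
      obtain ⟨u, v, hl, hv | hv⟩ := h
      all_goals
        obtain ⟨h₁, h₂⟩ := key hv (d' := .r) rfl hl
        exact ⟨u, _, h₁, h₂⟩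
    | r =>
      obtain ⟨u, v, hl, hv⟩ := h
      obtain ⟨h₁, h₂⟩ := key hv (d' := .r) rfl hl
      exact ⟨u, _, h₁, h₂⟩
  | c =>
    cases k with
    | p | t => exact ⟨l, [.c], rfl, Or.inl rfl⟩
    | qs =>
      obtain ⟨u, v, hl, hv | hv⟩ := h
      all_goals
        obtain ⟨h₁, h₂⟩ := key hv (d' := .s) rfl hl
        exact ⟨u, _, h₁, Or.inr h₂⟩
    | r =>
      obtain ⟨u, v, hl, hv⟩ := h
      obtain ⟨h₁, h₂⟩ := key hv (d' := .s) rfl hl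
      exact ⟨u, _, h₁, Or.inr h₂⟩
  | num i =>
    cases k with
    | p | qs => trivial
    | t =>
      by_cases hi : i.val < 3
      · simp only [searchStep, if_pos hi]
        obtain ⟨u, v, hl, hv | hv⟩ := h
        all_goals
          obtain ⟨h₁, h₂⟩ := key hv (d' := .ell i) (by simp [clStep, hi]) hl
          exact witness_last_of_event (Or.inl h₂) h₁
      · simp only [searchStep, if_neg hi]
        trivial
    | r =>
      by_cases hi : i.val < 3
      · simp only [searchStep, if_pos hi]
        trivial
      · simp only [searchStep, if_neg hi]
        obtain ⟨u, v, hl, hv⟩ := h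
        obtain ⟨h₁, h₂⟩ := key hv (d' := .ell i) (by simp [clStep, not_lt.mp hi]) hl
        exact witness_last_of_event (Or.inl h₂) h₁

lemma step_last {x : Al} (hx : ∀ i, x ≠ .res i) (m : Bool) (i : Fin 6) (k : Core) :
    step m (.last i k) x = match hit k x with
      | some j => if i = j then .last j .p else .fresh j .p
      | none => .last i (next k x) := by
  cases x with
  | res j => exact absurd rfl (hx j)
  | _ => rfl

lemma step_fresh {x : Al} (hx : ∀ i, x ≠ .res i) (m : Bool) (i : Fin 6) (k : Core) :
    step m (.fresh i k) x = match hit k x with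
      | some j => if i = j then .found else .fresh j .p
      | none => .fresh i (next k x) := by
  cases x with
  | res j => exact absurd rfl (hx j)
  | _ => rfl

lemma witness_step {l : List Al} {e : St} (h : Witness l e) (m : Bool) (x : Al) :
    Witness (l ++ [x]) (step m e x) := by
  cases e with
  | found =>
    by_cases hx : x = .y
    · simp only [step, if_pos hx]
      trivial
    · simp only [step, if_neg hx]
      obtain ⟨i, j, hij, u, v₁, v₂, v₃, z, h₁, h₂, h₃, hl⟩ := h
      exact ⟨i, j, hij, u, v₁, v₂, v₃, z ++ [x], h₁, h₂, h₃, by simp [hl]⟩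
  | search k => exact witness_search_step h m x
  | last i k =>
    by_cases hx : ∃ j, x = .res j
    · obtain ⟨j, rfl⟩ := hx
      exact witness_last_res l j
    push Not at hx
    obtain ⟨u, v₁, v, h₁, hv, hl⟩ := h
    rw [step_last hx]
    cases hk : hit k x with
    | none =>
      exact ⟨u, v₁, v ++ [x], h₁, by rw [clRun_snoc hv, clStep_of_hit_eq_none k x hk hx],
        by simp [hl]⟩
    | some j =>
      have hj : v ++ [x] ∈ Lcl j := (clRun_snoc hv x).trans (clStep_of_hit k x j hk)
      dsimp only
      split_ifs with hij
      · exact witness_last_of_event (u := u ++ v₁) (Or.inl hj) (by simp [hl])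
      · exact ⟨i, hij, u, v₁, v ++ [x], [], h₁, hj, rfl, by simp [hl]⟩
  | fresh i k =>
    by_cases hx : ∃ j, x = .res j
    · obtain ⟨j, rfl⟩ := hx
      exact witness_last_res l j
    push Not at hx
    obtain ⟨i', hi', u, v₁, v₂, v, h₁, h₂, hv, hl⟩ := h
    rw [step_fresh hx]
    cases hk : hit k x with
    | none =>
      exact ⟨i', hi', u, v₁, v₂, v ++ [x], h₁, h₂,
        by rw [clRun_snoc hv, clStep_of_hit_eq_none k x hk hx], by simp [hl]⟩
    | some j =>
      have hj : v ++ [x] ∈ Lcl j := (clRun_snoc hv x).trans (clStep_of_hit k x j hk)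
      dsimp only
      split_ifs with hij
      · subst hij
        exact ⟨i', i, hi', u, v₁, v₂, v ++ [x], [], h₁, h₂, hj, by simp [hl]⟩
      · exact ⟨i, hij, u ++ v₁, v₂, v ++ [x], [], Or.inl h₂, hj, rfl, by simp [hl]⟩

lemma wordSegment_self (w : ℕ → Al) (m : ℕ) : wordSegment w m m = [] := by
  simp [wordSegment]

lemma wordSegment_succ (w : ℕ → Al) {m n : ℕ} (h : m ≤ n) :
    wordSegment w m (n + 1) = wordSegment w m n ++ [w n] := by
  simp [wordSegment, Nat.succ_sub h, List.range_succ, h]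

lemma lang_subset : aut.Lang ⊆ LMain := by
  rintro w ⟨ρ, ⟨h0, hρ⟩, hacc⟩
  have hwit : ∀ m n, m ≤ n → ρ m = .search .p → Witness (wordSegment w m n) (ρ n) := by
    intro m n hmn hm
    induction n, hmn using Nat.le_induction with
    | base =>
      rw [hm]
      trivial
    | succ n hn ih =>
      obtain ⟨b, hb⟩ := hρ n
      rw [wordSegment_succ w hn]
      rw [show ρ (n + 1) = step b (ρ n) (w n) from hb]
      exact witness_step ih b (w n)
  choose g hg hsig using hacc
  let φ : ℕ → ℕ := fun k => Nat.rec 0 (fun _ n => g n + 1) k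
  have hφ : ∀ k, φ (k + 1) = g (φ k) + 1 := fun _ => rfl
  have hinit : ∀ k, ρ (φ k) = .search .p := by
    intro k
    cases k with
    | zero => exact h0
    | succ k => exact (hsig (φ k)).2.2
  refine ⟨φ, rfl, strictMono_nat_of_lt_succ fun k => ?_, fun k => ?_⟩
  · rw [hφ]
    exact Nat.lt_succ_of_le (hg _)
  · have h := hwit (φ k) (g (φ k)) (hg _) (hinit k)
    rw [show ρ (g (φ k)) = .found from (hsig (φ k)).1] at h
    obtain ⟨i, j, hij, u, v₁, v₂, v₃, z, h₁, h₂, h₃, hl⟩ := h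
    refine ⟨i, j, hij, u, v₁, v₂, v₃, z, h₁, h₂, h₃, ?_⟩
    rw [hφ, wordSegment_succ w (hg _), hl, show w (g (φ k)) = .y from (hsig (φ k)).2.1]

/-! ### The resolver -/

/-- Whether the digit belongs to `{4, 5, 6}`. -/
def isLarge (i : Fin 6) : Bool := decide (3 ≤ i.val)

/-- The memory of the resolver: the state of the exact classifier, and the kind of the last
classified word. -/
def memStep (c : Core × Bool) (x : Al) : Core × Bool :=
  (next c.1 x, match hit c.1 x with
    | some j => isLarge j
    | none => c.2)

/-- The memory of the resolver after reading a word. -/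
def mem (l : List Al) : Core × Bool := l.foldl memStep (.p, false)

/-- The state reached by a finite run. -/
def target (l : List (St × Al × St)) : St := (l.getLast?.map fun e => e.2.2).getD (.search .p)

lemma target_snoc (l : List (St × Al × St)) (e : St × Al × St) : target (l ++ [e]) = e.2.2 := by
  simp [target]

/-- The resolver expects the next classified word to be of the same kind as the last one. -/
def resolver : aut.Resolver where
  res l x := (target l, x, step (mem (l.map fun e => e.2.1)).2 (target l) x)
  res_valid l e x h := by
    refine ⟨?_, rfl, _, rfl⟩
    cases h with
    | nil => rfl
    | snoc _ _ => exact target_snoc _ _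

/-- A state of the automaton together with the memory of the resolver. -/
abbrev Config := St × Core × Bool

def configStep (c : Config) (x : Al) : Config := (step c.2.2 c.1 x, memStep c.2 x)

def run (c : Config) (l : List Al) : Config := l.foldl configStep c

/-- A significant transition is taken while reading the word. -/
def Signals (c : Config) : List Al → Prop
  | [] => False
  | x :: l => (c.1 = .found ∧ x = .y) ∨ Signals (configStep c x) l

lemma run_append (c : Config) (u v : List Al) : run c (u ++ v) = run (run c u) v :=
  List.foldl_append

lemma signals_append (c : Config) (u v : List Al) :
    Signals c (u ++ v) ↔ Signals c u ∨ Signals (run c u) v := by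
  induction u generalizing c with
  | nil => simp [Signals, run]
  | cons x u ih => simp only [List.cons_append, Signals, ih, or_assoc, run, List.foldl_cons]

/-- The state of the lossy classifier determined by the memory of the resolver. -/
def expected : Core → Bool → Search
  | .p, _ => .p
  | .t, _ => .t
  | .s, false => .t
  | .q, true => .qs
  | .s, true => .qs
  | .r, true => .r
  | _, _ => .p

/-- The classifier part of the state agrees with the memory of the resolver. -/
def Coherent (c : Config) : Prop :=
  match c.1 with
  | .found => True
  | .search k => k = expected c.2.1 c.2.2
  | .last _ k => k = c.2.1
  | .fresh _ k => k = c.2.1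

lemma searchStep_expected_cases : ∀ (k : Core) (m : Bool) (x : Al),
    (∃ j, searchStep m (expected k m) x = .last j .p ∧ next k x = .p ∧
      (x = .res j ∨ hit k x = some j)) ∨
    (searchStep m (expected k m) x = .search (expected (next k x) (memStep (k, m) x).2) ∧
      (∀ j, x ≠ .res j) ∧ (∀ j, hit k x = some j → m ≠ isLarge j)) := by
  decide

lemma Coherent.configStep {c : Config} (h : Coherent c) (x : Al) : Coherent (configStep c x) := by
  obtain ⟨e, k, m⟩ := c
  cases e with
  | found =>
    by_cases hx : x = .y
    · subst hx
      cases k <;> rfl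
    · simp [Coherent, LMainAutomaton.configStep, step, hx]
  | search κ =>
    obtain rfl : κ = expected k m := h
    rcases searchStep_expected_cases k m x with ⟨j, h₁, h₂, -⟩ | ⟨h₁, -⟩
    · simp only [Coherent, LMainAutomaton.configStep, step, h₁, memStep, h₂]
    · simp only [Coherent, LMainAutomaton.configStep, step, h₁]
      rfl
  | last i κ =>
    obtain rfl : κ = k := h
    by_cases hx : ∃ j, x = .res j
    · obtain ⟨j, rfl⟩ := hx
      exact (next_res κ j).symm
    push Not at hx
    simp only [Coherent, LMainAutomaton.configStep, step_last hx, memStep]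
    cases hk : hit κ x with
    | none => rfl
    | some j =>
      by_cases hij : i = j <;> simp [hij, next_of_hit κ x j hk]
  | fresh i κ =>
    obtain rfl : κ = k := h
    by_cases hx : ∃ j, x = .res j
    · obtain ⟨j, rfl⟩ := hx
      exact (next_res κ j).symm
    push Not at hx
    simp only [Coherent, LMainAutomaton.configStep, step_fresh hx, memStep]
    cases hk : hit κ x with
    | none => rfl
    | some j =>
      by_cases hij : i = j <;> simp [hij, next_of_hit κ x j hk]

lemma Coherent.run {c : Config} (h : Coherent c) (l : List Al) : Coherent (run c l) := by
  induction l generalizing c with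
  | nil => exact h
  | cons x l ih => exact ih (h.configStep x)

/-- The state is a search state. -/
def IsSearch : St → Prop
  | .search _ => True
  | _ => False

lemma not_isSearch_step {e : St} (h : ¬ IsSearch e) (m : Bool) (x : Al) :
    (e = .found ∧ x = .y) ∨ ¬ IsSearch (step m e x) := by
  cases e with
  | found =>
    by_cases hx : x = .y
    · exact Or.inl ⟨rfl, hx⟩
    · exact Or.inr (by simp [step, hx, IsSearch])
  | search k => exact absurd trivial h
  | last i k =>
    right
    by_cases hx : ∃ j, x = .res j
    · obtain ⟨j, rfl⟩ := hx
      exact id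
    push Not at hx
    rw [step_last hx]
    cases hit k x with
    | none => exact id
    | some j => by_cases hij : i = j <;> simp [hij, IsSearch]
  | fresh i k =>
    right
    by_cases hx : ∃ j, x = .res j
    · obtain ⟨j, rfl⟩ := hx
      exact id
    push Not at hx
    rw [step_fresh hx]
    cases hit k x with
    | none => exact id
    | some j => by_cases hij : i = j <;> simp [hij, IsSearch]

lemma signals_or_not_isSearch {c : Config} (h : ¬ IsSearch c.1) (l : List Al) :
    Signals c l ∨ ¬ IsSearch (run c l).1 := by
  induction l generalizing c with
  | nil => exact Or.inr h
  | cons x l ih =>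
    rcases not_isSearch_step h c.2.2 x with hx | hx
    · exact Or.inl (Or.inl hx)
    · exact (ih (c := configStep c x) hx).imp_left Or.inr

lemma signals_or_found {c : Config} (h : c.1 = .found) (l : List Al) :
    Signals c l ∨ (run c l).1 = .found := by
  induction l generalizing c with
  | nil => exact Or.inr h
  | cons x l ih =>
    by_cases hx : x = .y
    · exact Or.inl (Or.inl ⟨h, hx⟩)
    · refine (ih (c := configStep c x) ?_).imp_left Or.inr
      simp [configStep, h, step, hx]

lemma signals_of_found {c : Config} (h : c.1 = .found) (l : List Al) :
    Signals c (l ++ [.y]) := by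
  rw [signals_append]
  exact (signals_or_found h l).imp_right fun h => Or.inl ⟨h, rfl⟩

/-- The possible states after reading a word of `L_j`, when the last classified word before it
is of kind `m`. -/
def After (j : Fin 6) (m : Bool) : St → St → Prop
  | .found, e => e = .found
  | .search _, e => e = .last j .p ∨ IsSearch e ∧ m ≠ isLarge j
  | .last i _, e => if i = j then e = .last j .p else e = .fresh j .p
  | .fresh i _, e => if i = j then e = .found else e = .fresh j .p

/-- Reading a word of `L_j` from a configuration synchronised with the classifier. -/
lemma run_of_mem_Lcl {v : List Al} {j : Fin 6} {c : Config} (hc : Coherent c)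
    (h : clRun c.2.1.toCSt v = some (.ell j)) :
    Signals c v ∨ ((run c v).2 = (.p, isLarge j) ∧ After j c.2.2 c.1 (run c v).1) := by
  induction v generalizing c with
  | nil => cases hk : c.2.1 <;> simp [hk, clRun, Core.toCSt] at h
  | cons x v ih =>
    obtain ⟨e, k, m⟩ := c
    obtain ⟨hx, ⟨hk, rfl⟩ | ⟨hk, hv⟩⟩ := clRun_cons_eq_ell h
    · have hmem : memStep (k, m) x = (.p, isLarge j) := by
        simp [memStep, hk, next_of_hit k x j hk]
      by_cases hsig : e = .found ∧ x = .y
      · exact Or.inl (Or.inl hsig)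
      refine Or.inr ⟨hmem, ?_⟩
      change After j m e (step m e x)
      cases e with
      | found =>
        have hy : x ≠ .y := fun hy => hsig ⟨rfl, hy⟩
        simp [After, step, hy]
      | search κ =>
        obtain rfl : κ = expected k m := hc
        rcases searchStep_expected_cases k m x with ⟨i, h₁, -, h₂⟩ | ⟨h₁, -, h₂⟩
        · rcases h₂ with h₂ | h₂
          · exact absurd h₂ (hx i)
          · obtain rfl : j = i := by simpa [hk] using h₂
            exact Or.inl h₁
        · refine Or.inr ⟨?_, h₂ j hk⟩
          simp only [step, h₁, IsSearch]
      | last i κ =>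
        obtain rfl : κ = k := hc
        rw [step_last hx, hk]
        by_cases hij : i = j <;> simp [After, hij]
      | fresh i κ =>
        obtain rfl : κ = k := hc
        rw [step_fresh hx, hk]
        by_cases hij : i = j <;> simp [After, hij]
    · have hmem : memStep (k, m) x = (next k x, m) := by simp [memStep, hk]
      by_cases hsig : e = .found ∧ x = .y
      · exact Or.inl (Or.inl hsig)
      have hv' : clRun (configStep (e, k, m) x).2.1.toCSt v = some (.ell j) := hv
      refine (ih (hc.configStep x) hv').imp Or.inr fun ⟨h₁, h₂⟩ => ⟨h₁, ?_⟩
      change After j m e (run (configStep (e, k, m) x) v).1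
      simp only [configStep, hmem] at h₂ ⊢
      cases e with
      | found =>
        have hy : x ≠ .y := fun hy => hsig ⟨rfl, hy⟩
        simpa [step, hy] using h₂
      | search κ =>
        obtain rfl : κ = expected k m := hc
        rcases searchStep_expected_cases k m x with ⟨i, -, -, h₃⟩ | ⟨h₃, -, -⟩
        · rcases h₃ with h₃ | h₃
          · exact absurd h₃ (hx i)
          · simp [hk] at h₃
        · simpa only [step, h₃, After] using h₂
      | last i κ =>
        obtain rfl : κ = k := hc
        rw [step_last hx, hk] at h₂ ⊢
        exact h₂
      | fresh i κ =>
        obtain rfl : κ = k := hc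
        rw [step_fresh hx, hk] at h₂ ⊢
        exact h₂

/-- `Below k k'`: the classifier finds from `k'` everything it finds from `k`. -/
def Below (k k' : Core) : Bool :=
  decide (k = .p ∨ k = k' ∨ (k = .t ∧ k' = .s))

lemma hit_of_below : ∀ (k k' : Core) (x : Al) (j : Fin 6), Below k k' → hit k x = some j →
    hit k' x = some j := by decide

lemma next_below : ∀ (k k' : Core) (x : Al), Below k k' → hit k x = none →
    Below (next k x) (next k' x) := by decide

/-- The state records the label `i` of an event that has just ended, unless it is a search state
or the wait for `y`. -/
def Recorded (i : Fin 6) : St → Prop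
  | .found => True
  | .search _ => True
  | .last j k => j = i ∧ k = .p
  | .fresh j k => j = i ∧ k = .p

lemma recorded_step_of_hit {c : Config} (hc : Coherent c) {x : Al} {j : Fin 6}
    (hx : ∀ i, x ≠ .res i) (hk : hit c.2.1 x = some j) : Recorded j (step c.2.2 c.1 x) := by
  obtain ⟨e, k, m⟩ := c
  change hit k x = some j at hk
  cases e with
  | found => by_cases hy : x = .y <;> simp [step, hy, Recorded]
  | search κ =>
    obtain rfl : κ = expected k m := hc
    rcases searchStep_expected_cases k m x with ⟨i, h₁, -, h₂⟩ | ⟨h₁, -, h₂⟩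
    · rcases h₂ with h₂ | h₂
      · exact absurd h₂ (hx i)
      · obtain rfl : j = i := by simpa [hk] using h₂
        simp [step, h₁, Recorded]
    · simp [step, h₁, Recorded]
  | last i κ =>
    obtain rfl : κ = k := hc
    rw [step_last hx, hk]
    by_cases hij : i = j <;> simp [Recorded, hij]
  | fresh i κ =>
    obtain rfl : κ = k := hc
    rw [step_fresh hx, hk]
    by_cases hij : i = j <;> simp [Recorded, hij]

lemma recorded_run_of_mem_Lcl {v : List Al} {j : Fin 6} {k : Core} {c : Config} (hc : Coherent c)
    (hk : Below k c.2.1) (h : clRun k.toCSt v = some (.ell j)) :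
    (run c v).2.1 = .p ∧ Recorded j (run c v).1 := by
  induction v generalizing c k with
  | nil => cases k <;> simp [clRun, Core.toCSt] at h
  | cons x v ih =>
    obtain ⟨hx, ⟨hj, rfl⟩ | ⟨hj, hv⟩⟩ := clRun_cons_eq_ell h
    · have hj' := hit_of_below _ _ _ _ hk hj
      exact ⟨next_of_hit _ _ _ hj', recorded_step_of_hit hc hx hj'⟩
    · exact ih (hc.configStep x) (next_below _ _ _ hk hj) hv

lemma recorded_run_of_isEvent {v : List Al} {i : Fin 6} {c : Config} (hc : Coherent c)
    (h : IsEvent i v) : (run c v).2.1 = .p ∧ Recorded i (run c v).1 := by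
  rcases h with h | rfl
  · exact recorded_run_of_mem_Lcl hc (k := .p) (by simp [Below]) h
  · obtain ⟨e, k, m⟩ := c
    refine ⟨next_res k i, ?_⟩
    change Recorded i (step m e (.res i))
    cases e with
    | found => simp [step, Recorded]
    | search κ => cases κ <;> simp [step, searchStep, Recorded]
    | last _ _ => exact ⟨rfl, rfl⟩
    | fresh _ _ => exact ⟨rfl, rfl⟩

/-- An infix of the required form followed by `y` yields a significant transition, unless the
search for an event is still going on; in that case it ends that search. -/
lemma signals_or_leaves_search {c : Config} (hc : Coherent c) {i j : Fin 6} (hij : i ≠ j)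
    {u v₁ v₂ v₃ z : List Al} (h₁ : IsEvent i v₁) (h₂ : v₂ ∈ Lcl j) (h₃ : v₃ ∈ Lcl j) :
    Signals c (u ++ v₁ ++ v₂ ++ v₃ ++ z ++ [.y]) ∨
      IsSearch c.1 ∧ ¬ IsSearch (run c (u ++ v₁ ++ v₂ ++ v₃ ++ z ++ [.y])).1 := by
  set c₁ := run c (u ++ v₁) with hc₁
  set c₂ := run c₁ v₂ with hc₂
  set c₃ := run c₂ v₃ with hc₃
  have e₃ : run c (u ++ v₁ ++ v₂ ++ v₃) = c₃ := by
    rw [hc₃, hc₂, hc₁, run_append, run_append]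
  have hr := recorded_run_of_isEvent (hc.run u) h₁
  rw [← run_append, ← hc₁] at hr
  have coh₁ : Coherent c₁ := hc.run _
  have coh₂ : Coherent c₂ := coh₁.run _
  have hsplit : Signals c (u ++ v₁ ++ v₂ ++ v₃ ++ z ++ [.y]) ↔
      Signals c (u ++ v₁) ∨ Signals c₁ v₂ ∨ Signals c₂ v₃ ∨ Signals c₃ (z ++ [.y]) := by
    rw [List.append_assoc _ z, signals_append, e₃, signals_append, run_append, ← hc₁,
      ← hc₂, signals_append, ← hc₁, or_assoc, or_assoc]
  rw [hsplit]
  have hleave : ¬ IsSearch c₃.1 → Signals c₃ (z ++ [.y]) ∨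
      ¬ IsSearch (run c (u ++ v₁ ++ v₂ ++ v₃ ++ z ++ [.y])).1 := by
    intro h
    rw [List.append_assoc _ z, run_append, e₃]
    exact signals_or_not_isSearch h _
  have hend : c₃.1 = .found → Signals c₃ (z ++ [.y]) := fun h => signals_of_found h z
  have hstart : ¬ IsSearch c.1 → Signals c (u ++ v₁) ∨ ¬ IsSearch c₁.1 :=
    fun h => signals_or_not_isSearch h _
  rcases run_of_mem_Lcl coh₁ (v := v₂) (j := j) (by rw [hr.1]; exact h₂) with hs | ⟨hm₂, ha₂⟩
  · exact Or.inl (Or.inr (Or.inl hs))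
  rw [← hc₂] at hm₂ ha₂
  rcases run_of_mem_Lcl coh₂ (v := v₃) (j := j) (by rw [hm₂]; exact h₃) with hs | ⟨-, ha₃⟩
  · exact Or.inl (Or.inr (Or.inr (Or.inl hs)))
  rw [← hc₃, hm₂] at ha₃
  have hfresh : c₂.1 = .fresh j .p → c₃.1 = .found := by
    intro h
    rw [h] at ha₃
    simpa [After] using ha₃
  have hrec := hr.2
  rcases hq : c₁.1 with _ | κ | ⟨i', κ⟩ | ⟨i', κ⟩
  · rw [hq] at ha₂
    rw [show c₂.1 = .found from ha₂] at ha₃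
    exact Or.inl (Or.inr (Or.inr (Or.inr (hend ha₃))))
  · have hlast : ¬ IsSearch c₃.1 := by
      rw [hq] at ha₂
      rcases ha₂ with h | ⟨h, -⟩
      · rw [h] at ha₃
        rw [show c₃.1 = .last j .p by simpa [After] using ha₃]
        exact id
      · rcases hq₂ : c₂.1 with _ | κ₂ | ⟨i₂, κ₂⟩ | ⟨i₂, κ₂⟩
        · simp [hq₂, IsSearch] at h
        · rw [hq₂] at ha₃
          rw [show c₃.1 = .last j .p by simpa [After] using ha₃]
          exact id
        · simp [hq₂, IsSearch] at h
        · simp [hq₂, IsSearch] at h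
    have hs : IsSearch c₁.1 := by rw [hq]; trivial
    rcases hleave hlast with h | h
    · exact Or.inl (Or.inr (Or.inr (Or.inr h)))
    · by_cases hcs : IsSearch c.1
      · exact Or.inr ⟨hcs, h⟩
      · exact Or.inl (Or.inl ((hstart hcs).resolve_right (not_not_intro hs)))
  · rw [hq] at ha₂ hrec
    obtain ⟨rfl, -⟩ := hrec
    have hf : c₃.1 = .found := hfresh (by simpa [After, hij] using ha₂)
    exact Or.inl (Or.inr (Or.inr (Or.inr (hend hf))))
  · rw [hq] at ha₂ hrec
    obtain ⟨rfl, -⟩ := hrec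
    have hf : c₃.1 = .found := hfresh (by simpa [After, hij] using ha₂)
    exact Or.inl (Or.inr (Or.inr (Or.inr (hend hf))))

/-! ### Completeness -/

/-- The configuration of the resolver after reading `n` letters of `w`. -/
def config (w : ℕ → Al) (n : ℕ) : Config := run (.search .p, .p, false) (wordSegment w 0 n)

lemma config_succ (w : ℕ → Al) (n : ℕ) : config w (n + 1) = configStep (config w n) (w n) := by
  simp [config, wordSegment_succ w (Nat.zero_le n), run]

lemma coherent_config (w : ℕ → Al) (n : ℕ) : Coherent (config w n) :=
  Coherent.run (show Coherent (.search .p, .p, false) from rfl) _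

lemma config_eq_run (w : ℕ → Al) {m n : ℕ} (h : m ≤ n) :
    config w n = run (config w m) (wordSegment w m n) := by
  induction n, h using Nat.le_induction with
  | base => simp [wordSegment_self, run]
  | succ n hn ih =>
    rw [config_succ, wordSegment_succ w hn, run_append, ← ih]
    rfl

lemma exists_of_signals (w : ℕ → Al) {m n : ℕ} (h : m ≤ n)
    (hs : Signals (config w m) (wordSegment w m n)) :
    ∃ i, m ≤ i ∧ (config w i).1 = .found ∧ w i = .y := by
  induction n, h using Nat.le_induction with
  | base => simp [wordSegment_self, Signals] at hs
  | succ n hn ih =>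
    rw [wordSegment_succ w hn, signals_append, ← config_eq_run w hn] at hs
    rcases hs with hs | hs | hs
    · exact ih hs
    · exact ⟨n, hn, hs⟩
    · exact hs.elim

lemma hist_spec (w : ℕ → Al) (n : ℕ) :
    (target (resolver.hist w n), mem ((resolver.hist w n).map fun e => e.2.1)) = config w n := by
  induction n with
  | zero => rfl
  | succ n ih =>
    rw [config_succ, ← ih]
    simp [BuchiAutomaton.Resolver.hist, target_snoc, configStep, mem, resolver]

lemma res_hist (w : ℕ → Al) (n : ℕ) :
    resolver.res (resolver.hist w n) (w n) = ((config w n).1, w n, (config w (n + 1)).1) := by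
  rw [config_succ, ← hist_spec]
  rfl

lemma induced_of_mem_LMain {w : ℕ → Al} (hw : w ∈ LMain) : resolver.InducedBuchiAcc w := by
  obtain ⟨φ, -, hmono, hφ⟩ := hw
  have hblock : ∀ k, Signals (config w (φ k)) (wordSegment w (φ k) (φ (k + 1))) ∨
      IsSearch (config w (φ k)).1 ∧ ¬ IsSearch (config w (φ (k + 1))).1 := by
    intro k
    obtain ⟨i, j, hij, u, v₁, v₂, v₃, z, h₁, h₂, h₃, hl⟩ := hφ k
    rw [config_eq_run w (hmono.monotone (Nat.le_succ k)), hl]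
    exact signals_or_leaves_search (coherent_config w _) hij h₁ h₂ h₃
  intro N
  obtain ⟨n, hn, hf, hy⟩ : ∃ n, N ≤ n ∧ (config w n).1 = .found ∧ w n = .y := by
    rcases hblock N with h | ⟨-, h⟩
    · obtain ⟨n, hn, h⟩ := exists_of_signals w (hmono.monotone (Nat.le_succ N)) h
      exact ⟨n, (hmono.le_apply).trans hn, h⟩
    · rcases hblock (N + 1) with h' | ⟨h', -⟩
      · obtain ⟨n, hn, h⟩ := exists_of_signals w (hmono.monotone (Nat.le_succ (N + 1))) h'
        exact ⟨n, (Nat.le_succ N).trans ((hmono.le_apply).trans hn), h⟩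
      · exact absurd h' h
  refine ⟨n, hn, ?_⟩
  rw [res_hist]
  refine ⟨hf, hy, ?_⟩
  simp [config_succ, configStep, hf, hy, step]

lemma mem_lang_of_induced {w : ℕ → Al} (h : resolver.InducedBuchiAcc w) : w ∈ aut.Lang := by
  refine ⟨fun n => (config w n).1, ⟨rfl, fun n => ?_⟩, fun N => ?_⟩
  · exact ⟨_, congrArg Prod.fst (config_succ w n)⟩
  · obtain ⟨n, hn, hs⟩ := h N
    rw [res_hist] at hs
    exact ⟨n, hn, hs⟩

end LMainAutomaton

/-- There is a history-deterministic Büchi automaton with 65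
states recognising `L_main`. -/
theorem exists_hd_buchi_65_states_for_LMain :
    ∃ (Q : Type) (iQ : Fintype Q) (A : BuchiAutomaton Al Q),
      @Fintype.card Q iQ = 65 ∧ A.HistoryDeterministic ∧ A.Lang = LMain := by
  open LMainAutomaton in
  exact ⟨St, inferInstance, aut, rfl,
    ⟨resolver, fun _ hw => induced_of_mem_LMain (lang_subset hw)⟩,
    lang_subset.antisymm fun _ hw => mem_lang_of_induced (induced_of_mem_LMain hw)⟩
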